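/- For any integer k ≥ 1 and any positive integers 2 ≤ n_1 < n_2 < ... < n_k with n_{i+1} − n_i ≥ 2, there exists a monomial ideal I in a polynomial ring over a field whose degree excess function ε(I;n) = d(I^n) − p(I)n has local maxima exactly at the points n_1,...,n_k (where n is a local maximum if ε(I;n) > ε(I;n−1) and ε(I;n) > ε(I;n+1)). -/

import Mathlib

open MvPolynomial

/-- The maximal generating degree `d(I)` of a homogeneous ideal. -/
noncomputable def maxGenDeg {K : Type*} [Field K] {σ : Type*}
    (I : Ideal (MvPolynomial σ K)) : ℕ :=
  sInf {d | I = Ideal.span {f | f ∈ I ∧ f.totalDegree ≤ d}}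

/-- An ideal of a polynomial ring is a monomial ideal if it is generated by monomials. -/
def IsMonomialIdeal {K : Type*} [Field K] {σ : Type*}
    (I : Ideal (MvPolynomial σ K)) : Prop :=
  ∃ S : Set (σ →₀ ℕ), I = Ideal.span ((fun α => monomial α (1 : K)) '' S)

/-!
The degree excess function of a product of monomial ideals in disjoint sets of variables is the sum
of their degree excess functions, so it suffices to build the desired function from two kinds of
summands. The ramp `min n m` comes from `(x ^ (m + 1), y ^ (m + 1), x * y ^ m * w)`: `w` occurs in a
minimal generator of the `n`-th power with exponent at most `min n m`. The drop, equal to `2` for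
`n ≤ m` and to `0` afterwards, comes from
`(x ^ (m + 2), y ^ (m + 2)) * (x, y) + w ^ 2 * (x, y) ^ (m + 3)`: the products of `n` generators
free of `w` cover all monomials of degree `(m + 3) * n` in `x` and `y` exactly when `n > m`.
Adding to the ramp with `m = max S` one drop at each point of `S` gives a function which decreases
exactly at the steps leaving `S`; since `S` contains no two consecutive integers, it increases by
one at the steps entering `S`.
-/

section MonomialIdeals

open scoped Pointwise

variable (K : Type*) [Field K] {σ : Type*}

/-- The monomial ideal generated by the monomials with exponents in `T`. Its powers are described
by the pointwise multiples `n • T`, see `monomialIdeal_pow`. -/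
noncomputable def monomialIdeal (T : Set (σ →₀ ℕ)) : Ideal (MvPolynomial σ K) :=
  Ideal.span ((fun α => monomial α (1 : K)) '' T)

variable {K}

lemma monomial_mem_monomialIdeal {T : Set (σ →₀ ℕ)} {α : σ →₀ ℕ} :
    monomial α (1 : K) ∈ monomialIdeal K T ↔ ∃ β ∈ T, β ≤ α := by
  classical
  simp [monomialIdeal, mem_ideal_span_monomial_image, support_monomial]

lemma monomialIdeal_le_of_forall_exists_le {T U : Set (σ →₀ ℕ)} (h : ∀ α ∈ T, ∃ β ∈ U, β ≤ α) :
    monomialIdeal K T ≤ monomialIdeal K U := by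
  refine Ideal.span_le.2 ?_
  rintro _ ⟨α, hα, rfl⟩
  exact monomial_mem_monomialIdeal.2 (h α hα)

lemma monomialIdeal_setOf_minimal (T : Set (σ →₀ ℕ)) :
    monomialIdeal K {α | Minimal (· ∈ T) α} = monomialIdeal K T := by
  refine le_antisymm (Ideal.span_mono (Set.image_mono fun α hα => hα.prop))
    (monomialIdeal_le_of_forall_exists_le fun α hα => ?_)
  obtain ⟨β, hβα, hβ⟩ := exists_minimal_le_of_wellFoundedLT (· ∈ T) α hα
  exact ⟨β, hβ, hβα⟩

lemma monomialIdeal_mul (T U : Set (σ →₀ ℕ)) :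
    monomialIdeal K T * monomialIdeal K U = monomialIdeal K (T + U) := by
  rw [monomialIdeal, monomialIdeal, monomialIdeal, Ideal.span_mul_span', ← Set.image2_add,
    ← Set.image2_mul, Set.image_image2_distrib]
  exact fun α β => by rw [monomial_mul, one_mul]

lemma monomialIdeal_pow (T : Set (σ →₀ ℕ)) (n : ℕ) :
    monomialIdeal K T ^ n = monomialIdeal K (n • T) := by
  induction n with
  | zero => simp [monomialIdeal]
  | succ n ih => rw [pow_succ, ih, monomialIdeal_mul, succ_nsmul]

lemma span_eq_span_totalDegree_le {S : Set (MvPolynomial σ K)} {d : ℕ}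
    (h : ∀ f ∈ S, f.totalDegree ≤ d) :
    Ideal.span S = Ideal.span {f | f ∈ Ideal.span S ∧ f.totalDegree ≤ d} :=
  le_antisymm (Ideal.span_mono fun f hf => ⟨Ideal.subset_span hf, h f hf⟩)
    (Ideal.span_le.2 fun _ hf => hf.1)

lemma maxGenDeg_span_le {S : Set (MvPolynomial σ K)} {d : ℕ} (h : ∀ f ∈ S, f.totalDegree ≤ d) :
    maxGenDeg (Ideal.span S) ≤ d :=
  Nat.sInf_le (span_eq_span_totalDegree_le h)

lemma maxGenDeg_bot : maxGenDeg (⊥ : Ideal (MvPolynomial σ K)) = 0 :=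
  Nat.le_zero.1 <| Ideal.span_empty (α := MvPolynomial σ K) ▸ maxGenDeg_span_le (by simp)

lemma maxGenDeg_top : maxGenDeg (⊤ : Ideal (MvPolynomial σ K)) = 0 :=
  Nat.le_zero.1 <| Ideal.span_singleton_one (α := MvPolynomial σ K) ▸ maxGenDeg_span_le (by simp)

lemma degree_le_of_minimal {T : Set (σ →₀ ℕ)} {α : σ →₀ ℕ} (hα : Minimal (· ∈ T) α) {d : ℕ}
    (hd : monomialIdeal K T = Ideal.span {f | f ∈ monomialIdeal K T ∧ f.totalDegree ≤ d}) :
    α.degree ≤ d := by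
  have hle : monomialIdeal K T ≤ monomialIdeal K {β | β.degree ≤ d ∧ ∃ γ ∈ T, γ ≤ β} := by
    rw [hd]
    refine Ideal.span_le.2 ?_
    rintro f ⟨hfT, hfd⟩
    refine mem_ideal_span_monomial_image.2 fun β hβ => ⟨β, ⟨?_, ?_⟩, le_rfl⟩
    · exact (le_totalDegree hβ).trans hfd
    · exact mem_ideal_span_monomial_image.1 hfT β hβ
  obtain ⟨β, ⟨hβd, γ, hγ, hγβ⟩, hβα⟩ := monomial_mem_monomialIdeal.1
    (hle (monomial_mem_monomialIdeal.2 ⟨α, hα.prop, le_rfl⟩))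
  have hαβ : α ≤ β := (hα.le_of_le hγ (hγβ.trans hβα)).trans hγβ
  exact (Finsupp.degree_mono hαβ).trans hβd

theorem maxGenDeg_monomialIdeal {T : Set (σ →₀ ℕ)} {D : ℕ}
    (hD : IsGreatest (Finsupp.degree '' {α | Minimal (· ∈ T) α}) D) :
    maxGenDeg (monomialIdeal K T) = D := by
  refine IsLeast.csInf_eq ⟨?_, fun d hd => ?_⟩
  · rw [Set.mem_ofPred_eq, ← monomialIdeal_setOf_minimal]
    refine span_eq_span_totalDegree_le ?_
    rintro _ ⟨α, hα, rfl⟩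
    rw [totalDegree_monomial _ one_ne_zero]
    exact hD.2 ⟨α, hα, rfl⟩
  · obtain ⟨α, hα, rfl⟩ := hD.1
    exact degree_le_of_minimal hα hd

end MonomialIdeals

section DegreeExcess

open scoped Pointwise

/-- For every `n ≥ 1` the minimal generators of the `n`-th power of the monomial ideal with
exponent set `T` have maximal degree `p * n + f n`. When `f` is eventually constant, `f` is thus
the degree excess function of this ideal on the positive integers. -/
def HasDegreeExcess {σ : Type*} (T : Set (σ →₀ ℕ)) (p : ℕ) (f : ℕ → ℕ) : Prop :=
  ∀ n, 1 ≤ n → IsGreatest (Finsupp.degree '' {α | Minimal (· ∈ n • T) α}) (p * n + f n)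

variable {σ τ ι : Type*}

lemma HasDegreeExcess.maxGenDeg_pow {T : Set (σ →₀ ℕ)} {p : ℕ} {f : ℕ → ℕ}
    (h : HasDegreeExcess T p f) (K : Type*) [Field K] {n : ℕ} (hn : 1 ≤ n) :
    maxGenDeg (monomialIdeal K T ^ n) = p * n + f n := by
  rw [monomialIdeal_pow]
  exact maxGenDeg_monomialIdeal (h n hn)

/-- The exponent set of the product of two monomial ideals, with exponent sets `T` and `U`, after
embedding their variables into a common polynomial ring along `u` and `v`. -/
def mapDomainAdd (u : σ → ι) (v : τ → ι) (T : Set (σ →₀ ℕ)) (U : Set (τ →₀ ℕ)) : Set (ι →₀ ℕ) :=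
  Finsupp.mapDomain.addMonoidHom u '' T + Finsupp.mapDomain.addMonoidHom v '' U

lemma nsmul_mapDomainAdd (u : σ → ι) (v : τ → ι) (T : Set (σ →₀ ℕ)) (U : Set (τ →₀ ℕ)) (n : ℕ) :
    n • mapDomainAdd u v T U = mapDomainAdd u v (n • T) (n • U) := by
  simp only [mapDomainAdd, nsmul_add, Set.image_nsmul]

lemma image_degree_mapDomainAdd (u : σ → ι) (v : τ → ι) (T : Set (σ →₀ ℕ)) (U : Set (τ →₀ ℕ)) :
    Finsupp.degree '' mapDomainAdd u v T U = Finsupp.degree '' T + Finsupp.degree '' U := by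
  simp only [mapDomainAdd, Set.image_add, Set.image_image,
    Finsupp.mapDomain.addMonoidHom_apply, Finsupp.degree_mapDomain]

section DisjointVariables

variable {u : σ → ι} {v : τ → ι} (hu : u.Injective) (hv : v.Injective)
  (huv : Disjoint (Set.range u) (Set.range v))
include hu hv huv

lemma mapDomain_add_mapDomain_le_iff {α α' : σ →₀ ℕ} {β β' : τ →₀ ℕ} :
    α.mapDomain u + β.mapDomain v ≤ α'.mapDomain u + β'.mapDomain v ↔ α ≤ α' ∧ β ≤ β' := by
  refine ⟨fun h => ⟨fun i => ?_, fun j => ?_⟩, fun h => ?_⟩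
  · have hi : u i ∉ Set.range v := huv.notMem_of_mem_left ⟨i, rfl⟩
    simpa [Finsupp.mapDomain_apply hu, Finsupp.mapDomain_of_notMem_range, hi] using h (u i)
  · have hj : v j ∉ Set.range u := huv.notMem_of_mem_right ⟨j, rfl⟩
    simpa [Finsupp.mapDomain_apply hv, Finsupp.mapDomain_of_notMem_range, hj] using h (v j)
  · exact add_le_add (Finsupp.mapDomain_mono h.1) (Finsupp.mapDomain_mono h.2)

lemma setOf_minimal_mapDomainAdd (T : Set (σ →₀ ℕ)) (U : Set (τ →₀ ℕ)) :
    {γ | Minimal (· ∈ mapDomainAdd u v T U) γ} =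
      mapDomainAdd u v {α | Minimal (· ∈ T) α} {β | Minimal (· ∈ U) β} := by
  have le_iff {α α' : σ →₀ ℕ} {β β' : τ →₀ ℕ} :=
    mapDomain_add_mapDomain_le_iff hu hv huv (α := α) (α' := α') (β := β) (β' := β')
  ext γ
  constructor
  · rintro ⟨⟨_, ⟨α, hα, rfl⟩, _, ⟨β, hβ, rfl⟩, rfl⟩, hmin⟩
    refine ⟨_, ⟨α, ⟨hα, fun α' hα' hle => ?_⟩, rfl⟩, _, ⟨β, ⟨hβ, fun β' hβ' hle => ?_⟩, rfl⟩, rfl⟩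
    · exact (le_iff.1 <| hmin ⟨_, ⟨α', hα', rfl⟩, _, ⟨β, hβ, rfl⟩, rfl⟩ <|
        le_iff.2 ⟨hle, le_rfl⟩).1
    · exact (le_iff.1 <| hmin ⟨_, ⟨α, hα, rfl⟩, _, ⟨β', hβ', rfl⟩, rfl⟩ <|
        le_iff.2 ⟨le_rfl, hle⟩).2
  · rintro ⟨_, ⟨α, hα, rfl⟩, _, ⟨β, hβ, rfl⟩, rfl⟩
    refine ⟨⟨_, ⟨α, hα.prop, rfl⟩, _, ⟨β, hβ.prop, rfl⟩, rfl⟩, ?_⟩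
    rintro _ ⟨_, ⟨α', hα', rfl⟩, _, ⟨β', hβ', rfl⟩, rfl⟩ hle
    obtain ⟨hα'α, hβ'β⟩ := le_iff.1 hle
    exact le_iff.2 ⟨hα.le_of_le hα' hα'α, hβ.le_of_le hβ' hβ'β⟩

theorem HasDegreeExcess.mapDomainAdd {T : Set (σ →₀ ℕ)} {U : Set (τ →₀ ℕ)} {p q : ℕ}
    {f g : ℕ → ℕ} (hT : HasDegreeExcess T p f) (hU : HasDegreeExcess U q g) :
    HasDegreeExcess (mapDomainAdd u v T U) (p + q) (f + g) := by
  intro n hn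
  rw [nsmul_mapDomainAdd, setOf_minimal_mapDomainAdd hu hv huv, image_degree_mapDomainAdd,
    Pi.add_apply, add_mul, add_add_add_comm]
  obtain ⟨hα, hα_max⟩ := hT n hn
  obtain ⟨hβ, hβ_max⟩ := hU n hn
  exact ⟨Set.add_mem_add hα hβ, add_mem_upperBounds_add hα_max hβ_max⟩

end DisjointVariables

end DegreeExcess

section Pencils

open scoped Pointwise

/-- The exponents of the monomials `x ^ i * y ^ (q - i) * w ^ j` with `(i, j) ∈ A`, in the
variables `x, y, w` of index `0, 1, 2`; pairs with `q < i` contribute nothing. -/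
def pencil (q : ℕ) (A : Set (ℕ × ℕ)) : Set (Fin 3 →₀ ℕ) :=
  {α | α 0 + α 1 = q ∧ (α 0, α 2) ∈ A}

/-- The exponent of `x ^ i * y ^ k * w ^ j`. -/
noncomputable def tripleExponent (i k j : ℕ) : Fin 3 →₀ ℕ :=
  Finsupp.equivFunOnFinite.symm ![i, k, j]

lemma tripleExponent_mem_pencil {q i k j : ℕ} {A : Set (ℕ × ℕ)} :
    tripleExponent i k j ∈ pencil q A ↔ i + k = q ∧ (i, j) ∈ A := by
  simp [tripleExponent, pencil]

lemma pencil_add {q r : ℕ} {A B : Set (ℕ × ℕ)} (hA : ∀ a ∈ A, a.1 ≤ q) (hB : ∀ b ∈ B, b.1 ≤ r) :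
    pencil q A + pencil r B = pencil (q + r) (A + B) := by
  ext γ
  constructor
  · rintro ⟨α, ⟨hα, hαA⟩, β, ⟨hβ, hβB⟩, rfl⟩
    refine ⟨?_, _, hαA, _, hβB, rfl⟩
    simp only [Finsupp.add_apply]
    lia
  · rintro ⟨hγ, ⟨i, j⟩, ha, ⟨i', j'⟩, hb, hab⟩
    have hi : i ≤ q := hA _ ha
    have hi' : i' ≤ r := hB _ hb
    obtain ⟨h₀, h₂⟩ : i + i' = γ 0 ∧ j + j' = γ 2 := Prod.ext_iff.1 hab
    refine ⟨tripleExponent i (q - i) j, tripleExponent_mem_pencil.2 ⟨by lia, ha⟩,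
      tripleExponent i' (r - i') j', tripleExponent_mem_pencil.2 ⟨by lia, hb⟩, ?_⟩
    ext c
    fin_cases c
    exacts [h₀, show q - i + (r - i') = γ 1 by lia, h₂]

lemma fst_le_of_mem_nsmul {q : ℕ} {A : Set (ℕ × ℕ)} (hA : ∀ a ∈ A, a.1 ≤ q) {n : ℕ} :
    ∀ a ∈ n • A, a.1 ≤ q * n := by
  induction n with
  | zero => simp
  | succ n ih =>
    rw [succ_nsmul]
    rintro _ ⟨a, ha, b, hb, rfl⟩
    exact add_le_add (ih a ha) (hA b hb)

lemma nsmul_pencil {q : ℕ} {A : Set (ℕ × ℕ)} (hA : ∀ a ∈ A, a.1 ≤ q) {n : ℕ} (hn : 1 ≤ n) :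
    n • pencil q A = pencil (q * n) (n • A) := by
  induction n, hn using Nat.le_induction with
  | base => simp
  | succ n _ ih =>
    rw [succ_nsmul, ih, pencil_add (fst_le_of_mem_nsmul hA) hA, succ_nsmul, mul_add_one]

lemma minimal_mem_pencil_iff {q : ℕ} {A : Set (ℕ × ℕ)} {α : Fin 3 →₀ ℕ} :
    Minimal (· ∈ pencil q A) α ↔ α 0 + α 1 = q ∧ IsLeast {j | (α 0, j) ∈ A} (α 2) := by
  constructor
  · rintro ⟨⟨hα, hαA⟩, hmin⟩
    refine ⟨hα, hαA, fun j hj => ?_⟩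
    by_contra! hlt
    have hle : tripleExponent (α 0) (α 1) j ≤ α := by
      intro c
      fin_cases c <;> simp [tripleExponent, hlt.le]
    have hge : α ≤ tripleExponent (α 0) (α 1) j :=
      hmin (tripleExponent_mem_pencil.2 ⟨hα, hj⟩) hle
    exact hlt.not_ge (by simpa [tripleExponent] using hge 2)
  · rintro ⟨hα, hαA, hmin⟩
    refine ⟨⟨hα, hαA⟩, fun β ⟨hβ, hβA⟩ hle => ?_⟩
    have h₀ : β 0 = α 0 := by have := hle 0; have := hle 1; lia
    have h₁ : β 1 = α 1 := by lia
    have h₂ : α 2 ≤ β 2 := hmin (h₀ ▸ hβA)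
    intro c
    fin_cases c
    exacts [h₀.ge, h₁.ge, h₂]

lemma image_degree_setOf_minimal_pencil {q : ℕ} {A : Set (ℕ × ℕ)} (hA : ∀ a ∈ A, a.1 ≤ q) :
    Finsupp.degree '' {α | Minimal (· ∈ pencil q A) α} =
      (q + ·) '' {j | ∃ i, IsLeast {j | (i, j) ∈ A} j} := by
  ext d
  constructor
  · rintro ⟨α, hα, rfl⟩
    obtain ⟨hq, hleast⟩ := minimal_mem_pencil_iff.1 hα
    exact ⟨α 2, ⟨α 0, hleast⟩, by simp [Finsupp.degree_eq_sum, Fin.sum_univ_three, hq]⟩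
  · rintro ⟨j, ⟨i, hij⟩, rfl⟩
    have hi : i ≤ q := hA _ hij.1
    refine ⟨tripleExponent i (q - i) j, minimal_mem_pencil_iff.2 ⟨?_, hij⟩, ?_⟩
    · simp [tripleExponent, hi]
    · simp [tripleExponent, Finsupp.degree_eq_sum, Fin.sum_univ_three, hi]

theorem hasDegreeExcess_pencil {q : ℕ} {A : Set (ℕ × ℕ)} {f : ℕ → ℕ} (hA : ∀ a ∈ A, a.1 ≤ q)
    (hf : ∀ n, 1 ≤ n → IsGreatest {j | ∃ i, IsLeast {j | (i, j) ∈ n • A} j} (f n)) :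
    HasDegreeExcess (pencil q A) q f := by
  intro n hn
  rw [nsmul_pencil hA hn, image_degree_setOf_minimal_pencil (fst_le_of_mem_nsmul hA)]
  exact (add_right_mono : Monotone (q * n + ·)).map_isGreatest (hf n hn)

end Pencils

section Blocks

open scoped Pointwise

lemma nsmul_eq_of_add_eq {M : Type*} [AddMonoid M] {B : ℕ → Set M}
    (hB : ∀ n, 1 ≤ n → B n + B 1 = B (n + 1)) {n : ℕ} (hn : 1 ≤ n) : n • B 1 = B n := by
  induction n, hn using Nat.le_induction with
  | base => exact one_nsmul _
  | succ n hn ih => rw [succ_nsmul, ih, hB n hn]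

/-- The pairs `(i, j)` for which `x ^ i * y ^ ((m + 1) * n - i) * w ^ j` is a product of `n` of the
generators of the ideal `(x ^ (m + 1), y ^ (m + 1), x * y ^ m * w)`: here `a` of the factors are
`x ^ (m + 1)`, and `j` of them are `x * y ^ m * w`. -/
def rampPairs (m n : ℕ) : Set (ℕ × ℕ) :=
  {b | ∃ a, a + b.2 ≤ n ∧ b.1 = a * (m + 1) + b.2}

lemma mem_rampPairs {m n i j : ℕ} :
    (i, j) ∈ rampPairs m n ↔ ∃ a, a + j ≤ n ∧ i = a * (m + 1) + j :=
  Iff.rfl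

lemma rampPairs_add (m n : ℕ) : rampPairs m n + rampPairs m 1 = rampPairs m (n + 1) := by
  refine Set.Subset.antisymm ?_ ?_
  · rintro _ ⟨⟨i₁, j₁⟩, h₁, ⟨i₂, j₂⟩, h₂, rfl⟩
    obtain ⟨a, ha, rfl⟩ := mem_rampPairs.1 h₁
    obtain ⟨b, hb, rfl⟩ := mem_rampPairs.1 h₂
    exact mem_rampPairs.2 ⟨a + b, by lia, by ring⟩
  · rintro ⟨i, j⟩ h
    obtain ⟨a, ha, rfl⟩ := mem_rampPairs.1 h
    rcases j with _ | j
    · rcases a with _ | a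
      · exact ⟨(0, 0), ⟨0, by simp⟩, (0, 0), ⟨0, by simp⟩, by simp⟩
      · exact ⟨(a * (m + 1), 0), ⟨a, by simpa using ha⟩, (m + 1, 0), ⟨1, by simp⟩,
          Prod.ext (by simp only [Prod.mk_add_mk]; ring) rfl⟩
    · exact ⟨(a * (m + 1) + j, j), ⟨a, by simpa [← add_assoc] using ha⟩, (1, 1), ⟨0, by simp⟩, rfl⟩

theorem hasDegreeExcess_ramp (m : ℕ) :
    HasDegreeExcess (pencil (m + 1) (rampPairs m 1)) (m + 1) fun n => min n m := by
  refine hasDegreeExcess_pencil ?_ fun n hn => ?_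
  · rintro ⟨i, j⟩ h
    obtain ⟨a, ha, rfl⟩ := mem_rampPairs.1 h
    nlinarith
  rw [nsmul_eq_of_add_eq (fun n _ => rampPairs_add m n) hn]
  refine ⟨⟨min n m, ⟨0, by simp⟩, fun j hj => ?_⟩, ?_⟩
  · obtain ⟨a, -, haj⟩ := mem_rampPairs.1 hj
    rcases a.eq_zero_or_pos with rfl | ha
    · lia
    · nlinarith [min_le_right n m]
  · rintro j ⟨i, hij, hmin⟩
    obtain ⟨a, ha, rfl⟩ := mem_rampPairs.1 hij
    refine le_min (by lia) ?_
    -- The relation behind the bound `j ≤ m` is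
    -- `(x * y ^ m * w) ^ (m + 1) = x ^ (m + 1) * (y ^ (m + 1)) ^ m * w ^ (m + 1)`.
    by_contra! hmj
    have hrel : (a * (m + 1) + j, j - (m + 1)) ∈ rampPairs m n :=
      mem_rampPairs.2 ⟨a + 1, by lia, by rw [add_one_mul]; lia⟩
    have := hmin hrel
    lia

/-- The pairs `(i, j)` for which `x ^ i * y ^ ((m + 3) * n - i) * w ^ j` lies in the `n`-th power of
`(x ^ (m + 2), y ^ (m + 2)) * (x, y) + w ^ 2 * (x, y) ^ (m + 3)`. The exponents of `w` are not
bounded above, which is immaterial for the ideal but closes this set under adding generators. -/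
def dropPairs (m n : ℕ) : Set (ℕ × ℕ) :=
  {b | b.1 ≤ (m + 3) * n ∧ (2 ≤ b.2 ∨ ∃ a ≤ n, ∃ t ≤ n, b.1 = (m + 2) * a + t)}

lemma mem_dropPairs {m n i j : ℕ} :
    (i, j) ∈ dropPairs m n ↔
      i ≤ (m + 3) * n ∧ (2 ≤ j ∨ ∃ a ≤ n, ∃ t ≤ n, i = (m + 2) * a + t) :=
  Iff.rfl

lemma add_mem_dropPairs {m n k i j i' j' : ℕ} (h : (i, j) ∈ dropPairs m n)
    (h' : (i', j') ∈ dropPairs m k) : (i + i', j + j') ∈ dropPairs m (n + k) := by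
  obtain ⟨hi, hj⟩ := mem_dropPairs.1 h
  obtain ⟨hi', hj'⟩ := mem_dropPairs.1 h'
  refine mem_dropPairs.2 ⟨by rw [mul_add]; exact add_le_add hi hi', ?_⟩
  rcases hj with hj | ⟨a, ha, t, ht, rfl⟩
  · exact .inl (le_add_right hj)
  rcases hj' with hj' | ⟨a', ha', t', ht', rfl⟩
  · exact .inl (le_add_left hj')
  · exact .inr ⟨a + a', add_le_add ha ha', t + t', add_le_add ht ht', by ring⟩

lemma mul_add_mem_dropPairs {m n a t : ℕ} (ha : a ≤ n) (ht : t ≤ n) (j : ℕ) :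
    ((m + 2) * a + t, j) ∈ dropPairs m n :=
  mem_dropPairs.2 ⟨by nlinarith, .inr ⟨a, ha, t, ht, rfl⟩⟩

lemma dropPairs_add (m : ℕ) {n : ℕ} (hn : 1 ≤ n) :
    dropPairs m n + dropPairs m 1 = dropPairs m (n + 1) := by
  refine Set.Subset.antisymm ?_ ?_
  · rintro _ ⟨⟨i₁, j₁⟩, h₁, ⟨i₂, j₂⟩, h₂, rfl⟩
    exact add_mem_dropPairs h₁ h₂
  · rintro ⟨i, j⟩ h
    obtain ⟨hi, hj | ⟨a, ha, t, ht, rfl⟩⟩ := mem_dropPairs.1 h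
    · rcases le_or_gt i ((m + 3) * n) with hin | hin
      · exact ⟨(i, j), ⟨hin, .inl hj⟩, (0, 0),
          mul_add_mem_dropPairs zero_le_one zero_le_one 0, rfl⟩
      · have hmi : m + 3 ≤ i := (Nat.le_mul_of_pos_right _ hn).trans hin.le
        exact ⟨(i - (m + 3), j), mem_dropPairs.2 ⟨by lia, .inl hj⟩, ((m + 2) * 1 + 1, 0),
          mul_add_mem_dropPairs le_rfl le_rfl 0, Prod.ext (by simp only [Prod.mk_add_mk]; lia) rfl⟩
    · have ha' : min a n + (a - n) = a := by lia
      have ht' : min t n + (t - n) = t := by lia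
      refine ⟨_, mul_add_mem_dropPairs (min_le_right a n) (min_le_right t n) j, _,
        mul_add_mem_dropPairs (a := a - n) (t := t - n) (by lia) (by lia) 0, Prod.ext ?_ rfl⟩
      dsimp only [Prod.mk_add_mk]
      rw [add_add_add_comm, ← mul_add, ha', ht']

/-- Once `m < n`, the intervals `[(m + 2) * a, (m + 2) * a + n]` with `a ≤ n` leave no gaps. -/
lemma mem_dropPairs_of_lt {m n i : ℕ} (hmn : m < n) (hi : i ≤ (m + 3) * n) (j : ℕ) :
    (i, j) ∈ dropPairs m n := by
  have hdiv : (m + 2) * (i / (m + 2)) + i % (m + 2) = i := Nat.div_add_mod i (m + 2)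
  have hmod : i % (m + 2) < m + 2 := Nat.mod_lt i (by lia)
  rcases le_or_gt (i / (m + 2)) n with hle | hlt
  · exact hdiv ▸ mul_add_mem_dropPairs hle (by lia) j
  · have hni : (m + 2) * n ≤ i := by
      rw [← hdiv]
      exact le_add_right (Nat.mul_le_mul_left _ hlt.le)
    obtain ⟨t, rfl⟩ := Nat.exists_eq_add_of_le hni
    exact mul_add_mem_dropPairs le_rfl (by nlinarith) j

theorem hasDegreeExcess_drop (m : ℕ) :
    HasDegreeExcess (pencil (m + 3) (dropPairs m 1)) (m + 3) fun n => if n ≤ m then 2 else 0 := by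
  refine hasDegreeExcess_pencil (fun a ha => by simpa using ha.1) fun n hn => ?_
  rw [nsmul_eq_of_add_eq (fun n => dropPairs_add m) hn]
  split_ifs with hnm
  · refine ⟨⟨n + 1, mem_dropPairs.2 ⟨by nlinarith, .inl le_rfl⟩, fun j hj => ?_⟩, ?_⟩
    · obtain ⟨-, hj | ⟨a, -, t, ht, hat⟩⟩ := mem_dropPairs.1 hj
      · exact hj
      · rcases a.eq_zero_or_pos with rfl | ha
        · lia
        · nlinarith
    · rintro j ⟨i, hij, hmin⟩
      exact hmin (show (i, 2) ∈ dropPairs m n from ⟨hij.1, .inl le_rfl⟩)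
  · have hmn : m < n := not_le.1 hnm
    refine ⟨⟨0, mem_dropPairs_of_lt hmn (Nat.zero_le _) 0, fun _ _ => Nat.zero_le _⟩, ?_⟩
    rintro j ⟨i, hij, hmin⟩
    exact hmin (mem_dropPairs_of_lt hmn hij.1 0)

end Blocks

section Profile

/-- `f` is the degree excess function, on the positive integers, of a monomial ideal in finitely
many variables. The condition `1 ≤ p` excludes the unit ideal. -/
def IsRealizableExcess (f : ℕ → ℕ) : Prop :=
  ∃ (s : ℕ) (T : Set (Fin s →₀ ℕ)) (p : ℕ), 1 ≤ p ∧ HasDegreeExcess T p f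

lemma IsRealizableExcess.add {f g : ℕ → ℕ} (hf : IsRealizableExcess f)
    (hg : IsRealizableExcess g) : IsRealizableExcess (f + g) := by
  obtain ⟨s, T, p, hp, hT⟩ := hf
  obtain ⟨t, U, q, -, hU⟩ := hg
  have hdisj : Disjoint (Set.range (Fin.castAdd t)) (Set.range (Fin.natAdd s)) :=
    Set.disjoint_range_iff.2 fun i j => Fin.ne_of_val_ne (by
      simp only [Fin.val_castAdd, Fin.val_natAdd]
      lia)
  exact ⟨s + t, _, p + q, le_add_right hp, HasDegreeExcess.mapDomainAdd
    (Fin.castAdd_injective s t) (Fin.natAdd_injective t s) hdisj hT hU⟩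

lemma IsRealizableExcess.add_sum {α : Type*} {f : ℕ → ℕ} {g : α → ℕ → ℕ}
    (hf : IsRealizableExcess f) (hg : ∀ a, IsRealizableExcess (g a)) (S : Finset α) :
    IsRealizableExcess (f + ∑ a ∈ S, g a) := by
  classical
  induction S using Finset.induction_on with
  | empty => simpa using hf
  | insert a S ha ih =>
    rw [Finset.sum_insert ha, add_left_comm]
    exact (hg a).add ih

/-- The degree excess function whose local maxima are the elements of `S`: the sum of a ramp up to
`max S` and of one drop of height `2` after each element of `S`. -/
def excessProfile (S : Finset ℕ) (n : ℕ) : ℕ := min n (S.sup id) + ∑ a ∈ S, if n ≤ a then 2 else 0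

theorem isRealizableExcess_excessProfile (S : Finset ℕ) :
    IsRealizableExcess (excessProfile S) := by
  have hramp : IsRealizableExcess fun n => min n (S.sup id) :=
    ⟨3, _, _, Nat.le_add_left 1 _, hasDegreeExcess_ramp (S.sup id)⟩
  have hdrop (a : ℕ) : IsRealizableExcess fun n => if n ≤ a then 2 else 0 :=
    ⟨3, _, _, by lia, hasDegreeExcess_drop a⟩
  convert hramp.add_sum hdrop S using 1
  ext n
  simp [excessProfile]

lemma excessProfile_of_sup_lt {S : Finset ℕ} {n : ℕ} (hn : S.sup id < n) :
    excessProfile S n = S.sup id := by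
  have hsum : (∑ a ∈ S, if n ≤ a then 2 else 0) = 0 :=
    Finset.sum_eq_zero fun a ha => if_neg ((Finset.le_sup (f := id) ha).trans_lt hn).not_ge
  rw [excessProfile, hsum, add_zero, min_eq_right hn.le]

lemma sum_ite_le_eq_add {M : Type*} [AddCommMonoid M] (S : Finset ℕ) (n : ℕ) (c : M) :
    (∑ a ∈ S, if n ≤ a then c else 0) =
      (∑ a ∈ S, if n + 1 ≤ a then c else 0) + if n ∈ S then c else 0 := by
  rw [← Finset.sum_ite_eq S n fun _ => c, ← Finset.sum_add_distrib]
  refine Finset.sum_congr rfl fun a _ => ?_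
  split_ifs <;> first | lia | simp only [add_zero, zero_add]

theorem excessProfile_localMax_iff {S : Finset ℕ} (hS : ∀ n ∈ S, n + 1 ∉ S) (n : ℕ) :
    excessProfile S n < excessProfile S (n + 1) ∧
      excessProfile S (n + 2) < excessProfile S (n + 1) ↔ n + 1 ∈ S := by
  have hdrop := sum_ite_le_eq_add S n 2
  have hdrop' := sum_ite_le_eq_add S (n + 1) 2
  unfold excessProfile
  constructor
  · rintro ⟨-, hlt⟩
    by_contra hn
    rw [if_neg hn] at hdrop'
    lia
  · intro hn
    have hsup : n + 1 ≤ S.sup id := Finset.le_sup (f := id) hn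
    rw [if_neg fun h => hS n h hn] at hdrop
    rw [if_pos hn] at hdrop'
    lia

end Profile

lemma succ_notMem_image_of_gap {k : ℕ} {nseq : Fin k → ℕ} (hmono : StrictMono nseq)
    (hgap : ∀ i : Fin k, ∀ h : (i : ℕ) + 1 < k, nseq i + 2 ≤ nseq ⟨(i : ℕ) + 1, h⟩) :
    ∀ n ∈ Finset.univ.image nseq, n + 1 ∉ Finset.univ.image nseq := by
  simp only [Finset.mem_image, Finset.mem_univ, true_and]
  rintro _ ⟨i, rfl⟩ ⟨j, hj⟩
  have hij : (i : ℕ) < j := hmono.lt_iff_lt.1 (by lia)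
  have hnext : nseq ⟨i + 1, by lia⟩ ≤ nseq j := hmono.monotone (Fin.mk_le_of_le_val hij)
  have := hgap i (by lia)
  lia

theorem degree_excess_with_prescribed_local_maxima_general (K : Type*) [Field K] (S : Finset ℕ)
    (hS : ∀ n ∈ S, n + 1 ∉ S) :
    ∃ (s : ℕ) (I : Ideal (MvPolynomial (Fin s) K)), IsMonomialIdeal I ∧ I ≠ ⊥ ∧ I ≠ ⊤ ∧
      ∃ p : ℕ, (∃ c N : ℕ, ∀ n ≥ N, maxGenDeg (I ^ n) = p * n + c) ∧
        ∀ n : ℕ, 2 ≤ n →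
          ((((maxGenDeg (I ^ n) : ℤ) - p * n > (maxGenDeg (I ^ (n - 1)) : ℤ) - p * (n - 1)) ∧
            ((maxGenDeg (I ^ n) : ℤ) - p * n > (maxGenDeg (I ^ (n + 1)) : ℤ) - p * (n + 1)))
            ↔ n ∈ S) := by
  obtain ⟨s, T, p, hp, hT⟩ := isRealizableExcess_excessProfile S
  set I := monomialIdeal K T
  have hd (n : ℕ) (hn : 1 ≤ n) : maxGenDeg (I ^ n) = p * n + excessProfile S n :=
    hT.maxGenDeg_pow K hn
  have hpos : 0 < maxGenDeg I := by
    rw [← pow_one I, hd 1 le_rfl]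
    lia
  refine ⟨s, I, ⟨T, rfl⟩, ?_, ?_, p, ⟨S.sup id, S.sup id + 1, fun n hn => ?_⟩, ?_⟩
  · exact fun h => hpos.ne' (h ▸ maxGenDeg_bot)
  · exact fun h => hpos.ne' (h ▸ maxGenDeg_top)
  · rw [hd n (by lia), excessProfile_of_sup_lt (by lia)]
  · intro n hn
    obtain ⟨n, rfl⟩ : ∃ m, n = m + 1 := ⟨n - 1, by lia⟩
    rw [← excessProfile_localMax_iff hS, Nat.add_sub_cancel, hd n (by lia), hd (n + 1) (by lia),
      hd (n + 1 + 1) (by lia)]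
    push_cast
    refine and_congr ?_ ?_ <;> constructor <;> intro h <;> linarith

/-- given `2 ≤ n_1 < n_2 < ... < n_k` with consecutive gaps at least `2`,
there is a monomial ideal whose degree excess function `ε(I;n) = d(I^n) − p(I)·n` has
local maxima exactly at the points `n_1, ..., n_k`. -/
theorem degree_excess_with_prescribed_local_maxima
    (k : ℕ) (hk : 1 ≤ k) (nseq : Fin k → ℕ)
    (h2 : ∀ i, 2 ≤ nseq i) (hmono : StrictMono nseq)
    (hgap : ∀ i : Fin k, ∀ h : (i : ℕ) + 1 < k, nseq i + 2 ≤ nseq ⟨(i : ℕ) + 1, h⟩) :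
    ∃ (K : Type) (_ : Field K) (s : ℕ) (I : Ideal (MvPolynomial (Fin s) K)),
      IsMonomialIdeal I ∧ I ≠ ⊥ ∧ I ≠ ⊤ ∧
      ∃ p : ℕ, (∃ c N : ℕ, ∀ n ≥ N, maxGenDeg (I ^ n) = p * n + c) ∧
        ∀ n : ℕ, 2 ≤ n →
          ((((maxGenDeg (I ^ n) : ℤ) - p * n > (maxGenDeg (I ^ (n - 1)) : ℤ) - p * (n - 1)) ∧
            ((maxGenDeg (I ^ n) : ℤ) - p * n > (maxGenDeg (I ^ (n + 1)) : ℤ) - p * (n + 1)))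
            ↔ n ∈ Set.range nseq) := by
  obtain ⟨s, I, hI⟩ := degree_excess_with_prescribed_local_maxima_general ℚ
    (Finset.univ.image nseq) (succ_notMem_image_of_gap hmono hgap)
  exact ⟨ℚ, inferInstance, s, I, by simpa using hI⟩
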